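/- Let π := δ_{(1,1)} be the Dirac point measure at (1,1) on ℝ≥0 × ℝ≥0, let x : ℝ≥0 → ℝ be the constant function 1, and for n ≥ 1 define the continuous function x^n : ℝ≥0 → ℝ by x^n(t) = 1 for t ∈ [0, 1/2], x^n(t) = 1 − (2/n)(t − 1/2) for t ∈ [1/2, 1], x^n(t) = 1 − 1/n + (2/n)(t − 1) for t ∈ [1, 3/2], and x^n(t) = 1 for t ≥ 3/2 (so x^n dips linearly from 1 down to 1 − 1/n at t = 1 and back). Then: (1) sup_{t≥0} |x(t) − x^n(t)| = 1/n → 0; (2) Φ(x, π)(t) = 1 for t ≥ 1 and Φ(x, π)(t) = 0 for 0 ≤ t < 1; (3) Φ(x^n, π)(t) = 0 for every t ≥ 0 and every n ≥ 1. In particular, x^n → x uniformly but Φ(x^n, π)(t) does not converge to Φ(x, π)(t) for t ≥ 1, so the thinning map Φ is not continuous at (x, π). -/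

import Mathlib

open MeasureTheory Filter Topology Set ENNReal NNReal

noncomputable section

/-- The thinning `Φ(x, π)(t) = π({(s,z) : s ≤ t, z ≤ x(s−)})`, where `xl` is the
left-limit function of `x` (here the processes are continuous, so `xl` is the process itself). -/
def Phi (xl : ℝ → ℝ) (π : Measure (ℝ × ℝ)) (t : ℝ) : ℝ≥0∞ :=
  π {p : ℝ × ℝ | 0 ≤ p.1 ∧ p.1 ≤ t ∧ 0 ≤ p.2 ∧ p.2 ≤ xl p.1}

/-- The function `x^n`: equal to `1` off `[1/2, 3/2]`, dipping linearly to `1 − 1/n` at `t = 1`. -/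
def xApprox (n : ℕ) (t : ℝ) : ℝ :=
  if t ≤ 1 / 2 then 1
  else if t ≤ 1 then 1 - (2 / n) * (t - 1 / 2)
  else if t ≤ 3 / 2 then 1 - 1 / n + (2 / n) * (t - 1)
  else 1

theorem xApprox_bound (n : ℕ) (t : ℝ) : |(1 : ℝ) - xApprox n t| ≤ 1 / n := by
  have h : (0:ℝ) ≤ 1 / n := by positivity
  have h2 : (2:ℝ) / n = 2 * (1 / n) := by ring
  unfold xApprox
  rw [h2]
  generalize (1:ℝ) / n = c at *
  rw [abs_le]
  split_ifs <;> constructor <;> nlinarith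

theorem xApprox_one (n : ℕ) : xApprox n 1 = 1 - 1 / n := by
  unfold xApprox
  norm_num

theorem xApprox_sup (n : ℕ) :
    (⨆ t : Set.Ici (0:ℝ), |(1 : ℝ) - xApprox n t|) = 1 / n := by
  haveI : Nonempty (Set.Ici (0:ℝ)) := ⟨⟨0, by simp⟩⟩
  apply le_antisymm
  · exact ciSup_le fun t => xApprox_bound n t
  · have hb : BddAbove (Set.range fun t : Set.Ici (0:ℝ) => |(1 : ℝ) - xApprox n t|) := by
      refine ⟨1 / n, ?_⟩
      rintro _ ⟨t, rfl⟩
      exact xApprox_bound n t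
    have h := le_ciSup hb ⟨1, by norm_num⟩
    simp only [xApprox_one] at h
    exact le_trans (le_trans (by linarith) (le_abs_self _)) h

theorem Phi_dirac (f : ℝ → ℝ) (t : ℝ) [Decidable (1 ≤ t ∧ 1 ≤ f 1)] :
    Phi f (Measure.dirac ((1:ℝ), (1:ℝ))) t = if 1 ≤ t ∧ 1 ≤ f 1 then 1 else 0 := by
  unfold Phi
  rw [Measure.dirac_apply]
  simp [Set.indicator_apply]

theorem Phi_approx (n : ℕ) (hn : 1 ≤ n) (t : ℝ) :
    Phi (xApprox n) (Measure.dirac ((1:ℝ), (1:ℝ))) t = 0 := by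
  classical
  rw [Phi_dirac, if_neg]
  rintro ⟨-, h⟩
  rw [xApprox_one] at h
  have : (0:ℝ) < 1 / n := by
    have : (0:ℝ) < n := by exact_mod_cast hn
    positivity
  linarith

theorem Phi_one (t : ℝ) :
    Phi (fun _ => 1) (Measure.dirac ((1:ℝ), (1:ℝ))) t = if 1 ≤ t then 1 else 0 := by
  classical
  rw [Phi_dirac]
  simp

/-- The counterexample: with `π = δ_{(1,1)}` and `x ≡ 1`, the functions `x^n` converge to `x`
uniformly on `ℝ≥0` (with `sup |x − x^n| = 1/n`), yet `Φ(x^n, π) ≡ 0` while `Φ(x, π)(t) = 1`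
for `t ≥ 1`; hence `Φ` is not continuous at `(x, π)`. -/
theorem statement12 :
    (∀ n : ℕ, 1 ≤ n →
      (⨆ t : Set.Ici (0:ℝ), |(1 : ℝ) - xApprox n t|) = 1 / n) ∧
    Filter.Tendsto (fun n : ℕ => ⨆ t : Set.Ici (0:ℝ), |(1 : ℝ) - xApprox n t|)
      Filter.atTop (nhds 0) ∧
    (∀ t : ℝ, 0 ≤ t →
      Phi (fun _ => 1) (Measure.dirac ((1:ℝ), (1:ℝ))) t = if 1 ≤ t then 1 else 0) ∧
    (∀ n : ℕ, 1 ≤ n → ∀ t : ℝ, 0 ≤ t →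
      Phi (xApprox n) (Measure.dirac ((1:ℝ), (1:ℝ))) t = 0) ∧
    (∀ t : ℝ, 1 ≤ t →
      ¬ Filter.Tendsto (fun n : ℕ => Phi (xApprox n) (Measure.dirac ((1:ℝ), (1:ℝ))) t)
        Filter.atTop (nhds (Phi (fun _ => 1) (Measure.dirac ((1:ℝ), (1:ℝ))) t))) := by
  refine ⟨fun n _ => xApprox_sup n, ?_, fun t _ => Phi_one t,
    fun n hn t _ => Phi_approx n hn t, ?_⟩
  · simp only [xApprox_sup]
    exact tendsto_one_div_atTop_nhds_zero_nat
  · intro t ht h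
    rw [Phi_one, if_pos ht] at h
    have h0 : Tendsto (fun n : ℕ => Phi (xApprox n) (Measure.dirac ((1:ℝ), (1:ℝ))) t)
        atTop (nhds 0) := by
      apply tendsto_const_nhds.congr'
      filter_upwards [eventually_ge_atTop 1] with n hn
      exact (Phi_approx n hn t).symm
    exact one_ne_zero (tendsto_nhds_unique h h0)
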